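/- Let n_1, n_2 >= 1 and n >= max(n_1, n_2) be integers. Assume mu_1 and mu'_2 are unramified and mu_2 is trivial on 1 + p^n Z_p, and set alpha_1 = mu_1(p)^{-1} * sqrt(p). Let v_1 : G -> C satisfy: v_1(b*g) = mu_1(a) * mu'_1(d) * |a/d|^{1/2} * v_1(g) for every b = [[a,b0],[0,d]] in B and g in G; v_1(g*k) = mu_1(d) * mu'_1(d) * v_1(g) for every g in G and every k in I_{n_1} with (2,2) entry d; v_1(k) = 0 for every k in K \ I_{n_1}; and v_1(1) = 1. Let v_2 : G -> C satisfy: v_2(b*g) = mu_2(a) * mu'_2(d) * |a/d|^{1/2} * v_2(g) for every b = [[a,b0],[0,d]] in B and g in G; v_2(g*k) = mu_2(d) * mu'_2(d) * v_2(g) for every g in G and every k in I_{n_2} with (2,2) entry d; v_2(k) = 0 for every k in I; and v_2([[1,0],[1,1]]) = 1. Let h : G -> C satisfy h(t*g) = chi_1(t) * chi'_2(t) * h(g) for all t in T and g in G, h(j) = 1 for all j in J_n, and h(g) = 0 whenever g is not of the form t*j with t in T and j in J_n; and let H : G × G -> C satisfy H(b_1*g_1, b_2*g_2) = chi_1(b_1)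 * chi_2(b_2) * delta(b_1*b_2)^{1/2} * H(g_1,g_2) for all b_1, b_2 in B and g_1, g_2 in G, H(g,g) = 0 and H(g, w*g) = h(g) for all g in G. Then for all (g_1,g_2) in G × G: H(g_1,g_2) = mu_2(-1) * alpha_1^{n_1 - n} * v_1(g_1 * gamma^{n - n_1}) * v_2(g_2). -/

import Mathlib

open Matrix

noncomputable section

variable (p : ℕ) [Fact p.Prime]

/-- The underlying matrix of an element of `GL₂(ℚ_p)`. -/
def mat (g : GL (Fin 2) ℚ_[p]) : Matrix (Fin 2) (Fin 2) ℚ_[p] := g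

/-- Membership in `K = GL₂(ℤ_p)`: all entries are `p`-adic integers and the
determinant is a unit of `ℤ_p`. -/
def inK (g : GL (Fin 2) ℚ_[p]) : Prop :=
  (∀ i j, ‖mat p g i j‖ ≤ 1) ∧ ‖(mat p g).det‖ = 1

/-- Membership in the Iwahori subgroup `I_n` of `K`: for `n = 0`, `I_0 = K`;
for `n ≥ 1`, the diagonal entries are units of `ℤ_p` and the lower left entry
lies in `p^n ℤ_p`. -/
def inI (n : ℕ) (g : GL (Fin 2) ℚ_[p]) : Prop :=
  inK p g ∧ (n = 0 ∨
    (‖mat p g 0 0‖ = 1 ∧ ‖mat p g 1 1‖ = 1 ∧ ‖mat p g 1 0‖ ≤ (p : ℝ) ^ (-(n : ℤ))))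

/-- `p` as a unit of `ℚ_p`. -/
def pu : ℚ_[p]ˣ :=
  Units.mk0 (p : ℚ_[p]) (by exact_mod_cast (Fact.out : p.Prime).ne_zero)

/-- The element `γ = diag(p⁻¹, 1)` of `GL₂(ℚ_p)`. -/
def gamma : GL (Fin 2) ℚ_[p] :=
  Matrix.GeneralLinearGroup.mkOfDetNeZero !![(p : ℚ_[p])⁻¹, 0; 0, 1] (by
    have hp : (p : ℚ_[p]) ≠ 0 := by exact_mod_cast (Fact.out : p.Prime).ne_zero
    simp [Matrix.det_fin_two_of, hp])

/-- A character of `ℚ_p^×` is unramified if it is trivial on `ℤ_p^×`. -/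
def Unramified (μ : ℚ_[p]ˣ →* ℂˣ) : Prop :=
  ∀ u : ℚ_[p]ˣ, ‖(u : ℚ_[p])‖ = 1 → μ u = 1

/-- A character of `ℚ_p^×` is trivial on `1 + p^j ℤ_p`. -/
def TrivialOnOnePlusP (j : ℕ) (μ : ℚ_[p]ˣ →* ℂˣ) : Prop :=
  ∀ u : ℚ_[p]ˣ, ‖(u : ℚ_[p]) - 1‖ ≤ (p : ℝ) ^ (-(j : ℤ)) → μ u = 1

/-- The Weyl element `w = [[0,1],[1,0]]` of `GL₂(ℚ_p)`. -/
def wEl : GL (Fin 2) ℚ_[p] :=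
  Matrix.GeneralLinearGroup.mkOfDetNeZero !![(0 : ℚ_[p]), 1; 1, 0] (by
    simp [Matrix.det_fin_two_of])

/-- Membership in the diagonal torus `T` of `GL₂(ℚ_p)`. -/
def inT (g : GL (Fin 2) ℚ_[p]) : Prop := mat p g 1 0 = 0 ∧ mat p g 0 1 = 0

/-- Membership in `J_n = [[1, ℤ_p], [p^n ℤ_p, 1]]`. -/
def inJ (n : ℕ) (g : GL (Fin 2) ℚ_[p]) : Prop :=
  mat p g 0 0 = 1 ∧ mat p g 1 1 = 1 ∧ ‖mat p g 0 1‖ ≤ 1 ∧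
    ‖mat p g 1 0‖ ≤ (p : ℝ) ^ (-(n : ℤ))

/-- The element `[[1,0],[1,1]]` of `GL₂(ℚ_p)`. -/
def lowerOne : GL (Fin 2) ℚ_[p] :=
  Matrix.GeneralLinearGroup.mkOfDetNeZero !![(1 : ℚ_[p]), 0; 1, 1] (by
    simp [Matrix.det_fin_two_of])

lemma p_ne : (p : ℚ_[p]) ≠ 0 := by exact_mod_cast (Fact.out : p.Prime).ne_zero

lemma mat_mul (g k : GL (Fin 2) ℚ_[p]) (i j : Fin 2) :
    mat p (g * k) i j = mat p g i 0 * mat p k 0 j + mat p g i 1 * mat p k 1 j := by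
  simp [mat, Matrix.mul_apply, Fin.sum_univ_two]

/-- explicit elements -/
def mkG (a b c d : ℚ_[p]) (h : a * d - b * c ≠ 0) : GL (Fin 2) ℚ_[p] :=
  Matrix.GeneralLinearGroup.mkOfDetNeZero !![a, b; c, d] (by
    simpa [Matrix.det_fin_two_of] using h)

lemma mkG_mat (a b c d : ℚ_[p]) (h : a * d - b * c ≠ 0) :
    mat p (mkG p a b c d h) 0 0 = a ∧ mat p (mkG p a b c d h) 0 1 = b ∧
    mat p (mkG p a b c d h) 1 0 = c ∧ mat p (mkG p a b c d h) 1 1 = d := by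
  refine ⟨?_, ?_, ?_, ?_⟩ <;> simp [mat, mkG, Matrix.GeneralLinearGroup.mkOfDetNeZero]

/-- determinant as unit -/
def du (g : GL (Fin 2) ℚ_[p]) : ℚ_[p]ˣ := Matrix.GeneralLinearGroup.det g

lemma du_val (g : GL (Fin 2) ℚ_[p]) : (du p g : ℚ_[p]) =
    mat p g 0 0 * mat p g 1 1 - mat p g 0 1 * mat p g 1 0 := by
  simp [du, mat, Matrix.det_fin_two]

lemma g_ext (g k : GL (Fin 2) ℚ_[p]) (h00 : mat p g 0 0 = mat p k 0 0)
    (h01 : mat p g 0 1 = mat p k 0 1) (h10 : mat p g 1 0 = mat p k 1 0)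
    (h11 : mat p g 1 1 = mat p k 1 1) : g = k := by
  apply Units.ext
  ext i j
  fin_cases i <;> fin_cases j <;> assumption

lemma exB (g g' : GL (Fin 2) ℚ_[p]) (e : ℚ_[p]ˣ)
    (hc : mat p g 1 0 = e * mat p g' 1 0) (hd : mat p g 1 1 = e * mat p g' 1 1) :
    ∃ b, g = b * g' ∧ mat p b 1 0 = 0 ∧ 
      mat p b 0 0 = ((du p g / (du p g' * e) : ℚ_[p]ˣ) : ℚ_[p]) ∧ mat p b 1 1 = e := by
  have hD := (du p g').ne_zero
  have hE := (du p g).ne_zero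
  have he := e.ne_zero
  have h1 := du_val p g
  have h2 := du_val p g'
  set D' := (du p g' : ℚ_[p])
  set D := (du p g : ℚ_[p])
  obtain ⟨m00, m01, m10, m11⟩ := mkG_mat p (D / (D' * e))
    ((- mat p g 0 0 * mat p g' 0 1 + mat p g 0 1 * mat p g' 0 0) / D') 0 e (by
      simp [hD, hE])
  refine ⟨mkG p (D / (D' * e))
    ((- mat p g 0 0 * mat p g' 0 1 + mat p g 0 1 * mat p g' 0 0) / D') 0 e _, ?_, m10, ?_, m11⟩
  · apply g_ext <;> rw [mat_mul]
    · rw [m00, m01]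
      field_simp
      rw [h1, h2, hc, hd]; ring
    · rw [m00, m01]
      field_simp
      rw [h1, h2, hc, hd]; ring
    · rw [m10, m11, hc]; ring
    · rw [m10, m11, hd]; ring
  · rw [m00]; simp [D, D']

lemma v_tr (μ μ' : ℚ_[p]ˣ →* ℂˣ) (v : GL (Fin 2) ℚ_[p] → ℂ)
    (hB : ∀ (b g : GL (Fin 2) ℚ_[p]) (a d : ℚ_[p]ˣ),
      mat p b 1 0 = 0 → mat p b 0 0 = a → mat p b 1 1 = d →
      v (b * g) = (μ a : ℂ) * (μ' d : ℂ) *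
        (Real.sqrt ‖(a : ℚ_[p]) / (d : ℚ_[p])‖ : ℂ) * v g)
    (g g' : GL (Fin 2) ℚ_[p]) (e : ℚ_[p]ˣ)
    (hc : mat p g 1 0 = e * mat p g' 1 0) (hd : mat p g 1 1 = e * mat p g' 1 1) :
    v g = (μ (du p g / (du p g' * e)) : ℂ) * (μ' e : ℂ) *
      (Real.sqrt ‖((du p g / (du p g' * e) : ℚ_[p]ˣ) : ℚ_[p]) / (e : ℚ_[p])‖ : ℂ) * v g' := by
  obtain ⟨b, rfl, h1, h2, h3⟩ := exB p g g' e hc hd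
  exact hB b g' _ _ h1 h2 h3

lemma inK_iff (g : GL (Fin 2) ℚ_[p]) (h00 : ‖mat p g 0 0‖ ≤ 1) (h01 : ‖mat p g 0 1‖ ≤ 1)
    (h10 : ‖mat p g 1 0‖ ≤ 1) (h11 : ‖mat p g 1 1‖ ≤ 1)
    (h : ‖mat p g 0 0 * mat p g 1 1 - mat p g 0 1 * mat p g 1 0‖ = 1) : inK p g := by
  refine ⟨?_, by rw [Matrix.det_fin_two]; exact h⟩
  intro i j
  fin_cases i <;> fin_cases j <;> assumption

/-- lower unipotent -/
def low (x : ℚ_[p]) : GL (Fin 2) ℚ_[p] := mkG p 1 0 x 1 (by simp)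
/-- Weyl type -/
def wey (y : ℚ_[p]) : GL (Fin 2) ℚ_[p] := mkG p 0 (-1) 1 y (by simp)

lemma low_mat (x : ℚ_[p]) : mat p (low p x) 0 0 = 1 ∧ mat p (low p x) 0 1 = 0 ∧
    mat p (low p x) 1 0 = x ∧ mat p (low p x) 1 1 = 1 := mkG_mat _ _ _ _ _ _

lemma wey_mat (x : ℚ_[p]) : mat p (wey p x) 0 0 = 0 ∧ mat p (wey p x) 0 1 = -1 ∧
    mat p (wey p x) 1 0 = 1 ∧ mat p (wey p x) 1 1 = x := mkG_mat _ _ _ _ _ _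

lemma low_du (x : ℚ_[p]) : du p (low p x) = 1 := by
  obtain ⟨h1, h2, h3, h4⟩ := low_mat p x
  ext; rw [du_val, h1, h2, h3, h4]; simp

lemma wey_du (x : ℚ_[p]) : du p (wey p x) = 1 := by
  obtain ⟨h1, h2, h3, h4⟩ := wey_mat p x
  ext; rw [du_val, h1, h2, h3, h4]; simp

lemma low_inK (x : ℚ_[p]) (hx : ‖x‖ ≤ 1) : inK p (low p x) := by
  obtain ⟨h1, h2, h3, h4⟩ := low_mat p x
  apply inK_iff <;> simp [h1, h2, h3, h4, hx]

lemma wey_inK (x : ℚ_[p]) (hx : ‖x‖ ≤ 1) : inK p (wey p x) := by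
  obtain ⟨h1, h2, h3, h4⟩ := wey_mat p x
  apply inK_iff <;> simp [h1, h2, h3, h4, hx]

lemma zp_le (n : ℕ) : (p : ℝ) ^ (-(n : ℤ)) ≤ 1 := by
  have : (1 : ℝ) ≤ p := by exact_mod_cast (Fact.out : p.Prime).one_le
  apply zpow_le_one_of_nonpos₀ this; simp

lemma zp_lt (n : ℕ) (hn : 1 ≤ n) : (p : ℝ) ^ (-(n : ℤ)) < 1 := by
  have : (1 : ℝ) < p := by exact_mod_cast (Fact.out : p.Prime).one_lt
  apply zpow_lt_one_of_neg₀ this; omega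

section V1
variable (n₁ : ℕ) (μ₁ μ'₁ : ℚ_[p]ˣ →* ℂˣ) (v₁ : GL (Fin 2) ℚ_[p] → ℂ)

lemma v1_val (hv₁B : ∀ (b g : GL (Fin 2) ℚ_[p]) (a d : ℚ_[p]ˣ),
      mat p b 1 0 = 0 → mat p b 0 0 = a → mat p b 1 1 = d →
      v₁ (b * g) = (μ₁ a : ℂ) * (μ'₁ d : ℂ) *
        (Real.sqrt ‖(a : ℚ_[p]) / (d : ℚ_[p])‖ : ℂ) * v₁ g)
    (hv₁I : ∀ (g k : GL (Fin 2) ℚ_[p]) (d : ℚ_[p]ˣ),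
      inI p n₁ k → mat p k 1 1 = d →
      v₁ (g * k) = (μ₁ d : ℂ) * (μ'₁ d : ℂ) * v₁ g)
    (hv₁1 : v₁ 1 = 1) (g : GL (Fin 2) ℚ_[p]) (d : ℚ_[p]ˣ) (hd : mat p g 1 1 = d)
    (hc : ‖mat p g 1 0‖ ≤ (p : ℝ) ^ (-(n₁ : ℤ)) * ‖mat p g 1 1‖) :
    v₁ g = (μ₁ (du p g / d) : ℂ) * (μ'₁ d : ℂ) *
      (Real.sqrt ‖(du p g : ℚ_[p]) / ((d : ℚ_[p]) * d)‖ : ℂ) := by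
  have hd0 := d.ne_zero
  obtain ⟨h1, h2, h3, h4⟩ := low_mat p (mat p g 1 0 / d)
  have hx : ‖mat p g 1 0 / d‖ ≤ (p : ℝ) ^ (-(n₁ : ℤ)) := by
    rw [norm_div, div_le_iff₀ (norm_pos_iff.2 hd0), ← hd]; exact hc
  rw [v_tr p μ₁ μ'₁ v₁ hv₁B g (low p (mat p g 1 0 / d)) d
    (by rw [h3]; field_simp) (by rw [h4, hd, mul_one])]
  have h5 := hv₁I 1 (low p (mat p g 1 0 / d)) 1
    ⟨low_inK p _ (hx.trans (zp_le p n₁)), Or.inr ⟨by simp [h1], by simp [h4], by rw [h3]; exact hx⟩⟩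
    (by simp [h4])
  rw [one_mul, hv₁1] at h5
  rw [h5, low_du]
  simp [div_div]

lemma v1_zero (hn₁ : 1 ≤ n₁) (hv₁B : ∀ (b g : GL (Fin 2) ℚ_[p]) (a d : ℚ_[p]ˣ),
      mat p b 1 0 = 0 → mat p b 0 0 = a → mat p b 1 1 = d →
      v₁ (b * g) = (μ₁ a : ℂ) * (μ'₁ d : ℂ) *
        (Real.sqrt ‖(a : ℚ_[p]) / (d : ℚ_[p])‖ : ℂ) * v₁ g)
    (hv₁supp : ∀ k : GL (Fin 2) ℚ_[p], inK p k → ¬ inI p n₁ k → v₁ k = 0)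
    (g : GL (Fin 2) ℚ_[p])
    (hc : ¬ ‖mat p g 1 0‖ ≤ (p : ℝ) ^ (-(n₁ : ℤ)) * ‖mat p g 1 1‖) : v₁ g = 0 := by
  by_cases hcd : ‖mat p g 1 1‖ ≤ ‖mat p g 1 0‖
  · have hc0 : mat p g 1 0 ≠ 0 := by
      intro h0; apply hc; rw [h0, norm_zero]; positivity
    obtain ⟨h1, h2, h3, h4⟩ := wey_mat p (mat p g 1 1 / mat p g 1 0)
    rw [v_tr p μ₁ μ'₁ v₁ hv₁B g (wey p (mat p g 1 1 / mat p g 1 0)) (Units.mk0 _ hc0)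
      (by rw [h3]; simp) (by rw [h4]; simp; field_simp), hv₁supp, mul_zero]
    · apply wey_inK
      rw [norm_div]; exact div_le_one_of_le₀ hcd (norm_nonneg _)
    · rintro ⟨-, h | ⟨h, -⟩⟩
      · omega
      · rw [h1] at h; simp at h
  · have hd0 : mat p g 1 1 ≠ 0 := by
      intro h0; apply hcd; rw [h0, norm_zero]; positivity
    obtain ⟨h1, h2, h3, h4⟩ := low_mat p (mat p g 1 0 / mat p g 1 1)
    rw [v_tr p μ₁ μ'₁ v₁ hv₁B g (low p (mat p g 1 0 / mat p g 1 1)) (Units.mk0 _ hd0)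
      (by rw [h3]; simp; field_simp) (by rw [h4]; simp), hv₁supp, mul_zero]
    · apply low_inK
      rw [norm_div]; exact div_le_one_of_le₀ (not_le.1 hcd).le (norm_nonneg _)
    · rintro ⟨-, h | ⟨-, -, h⟩⟩
      · omega
      · rw [h3, norm_div, div_le_iff₀ (norm_pos_iff.2 hd0)] at h
        exact hc h
end V1

section V2
variable (n₂ : ℕ) (μ₂ μ'₂ : ℚ_[p]ˣ →* ℂˣ) (v₂ : GL (Fin 2) ℚ_[p] → ℂ)

lemma v2_zero (hv₂B : ∀ (b g : GL (Fin 2) ℚ_[p]) (a d : ℚ_[p]ˣ),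
      mat p b 1 0 = 0 → mat p b 0 0 = a → mat p b 1 1 = d →
      v₂ (b * g) = (μ₂ a : ℂ) * (μ'₂ d : ℂ) *
        (Real.sqrt ‖(a : ℚ_[p]) / (d : ℚ_[p])‖ : ℂ) * v₂ g)
    (hv₂supp : ∀ k : GL (Fin 2) ℚ_[p], inI p 1 k → v₂ k = 0)
    (g : GL (Fin 2) ℚ_[p]) (hc : ¬ ‖mat p g 1 1‖ ≤ ‖mat p g 1 0‖) : v₂ g = 0 := by
  have hd0 : mat p g 1 1 ≠ 0 := by
    intro h0; apply hc; rw [h0, norm_zero]; positivity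
  obtain ⟨h1, h2, h3, h4⟩ := low_mat p (mat p g 1 0 / mat p g 1 1)
  have hlt : ‖mat p g 1 0 / mat p g 1 1‖ < 1 := by
    rw [norm_div, div_lt_one (norm_pos_iff.2 hd0)]; exact not_le.1 hc
  rw [v_tr p μ₂ μ'₂ v₂ hv₂B g (low p (mat p g 1 0 / mat p g 1 1)) (Units.mk0 _ hd0)
    (by rw [h3]; simp; field_simp) (by rw [h4]; simp), hv₂supp, mul_zero]
  refine ⟨low_inK p _ hlt.le, Or.inr ⟨by simp [h1], by simp [h4], ?_⟩⟩
  rw [h3, Padic.norm_le_pow_iff_norm_lt_pow_add_one]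
  simpa using hlt

lemma v2_val (hv₂B : ∀ (b g : GL (Fin 2) ℚ_[p]) (a d : ℚ_[p]ˣ),
      mat p b 1 0 = 0 → mat p b 0 0 = a → mat p b 1 1 = d →
      v₂ (b * g) = (μ₂ a : ℂ) * (μ'₂ d : ℂ) *
        (Real.sqrt ‖(a : ℚ_[p]) / (d : ℚ_[p])‖ : ℂ) * v₂ g)
    (hv₂I : ∀ (g k : GL (Fin 2) ℚ_[p]) (d : ℚ_[p]ˣ),
      inI p n₂ k → mat p k 1 1 = d →
      v₂ (g * k) = (μ₂ d : ℂ) * (μ'₂ d : ℂ) * v₂ g)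
    (hv₂1 : v₂ (lowerOne p) = 1)
    (g : GL (Fin 2) ℚ_[p]) (c : ℚ_[p]ˣ) (hc : mat p g 1 0 = c)
    (hd : ‖mat p g 1 1‖ ≤ ‖mat p g 1 0‖) :
    v₂ g = (μ₂ (du p g / c) : ℂ) * (μ'₂ c : ℂ) *
      (Real.sqrt ‖(du p g : ℚ_[p]) / ((c : ℚ_[p]) * c)‖ : ℂ) := by
  have hc0 := c.ne_zero
  set y := mat p g 1 1 / c with hy
  have hy1 : ‖y‖ ≤ 1 := by
    rw [hy, norm_div, ← hc]; exact div_le_one_of_le₀ hd (norm_nonneg _)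
  have hy2 : ‖y - 1‖ ≤ 1 := by
    have := Padic.nonarchimedean y (-1)
    rw [← sub_eq_add_neg] at this
    apply this.trans
    simp [hy1]
  obtain ⟨m00, m01, m10, m11⟩ := mkG_mat p 1 (y - 1) 0 1 (by simp)
  set k := mkG p 1 (y - 1) 0 1 (by simp)
  have e : lowerOne p = low p 1 := rfl
  obtain ⟨h1, h2, h3, h4⟩ := low_mat p 1
  have hk : inI p n₂ k := by
    refine ⟨?_, Or.inr ⟨by simp [m00], by simp [m11], ?_⟩⟩
    · apply inK_iff <;> simp [m00, m01, m10, m11, hy2]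
    · rw [m10, norm_zero]; positivity
  have h5 := hv₂I (lowerOne p) k 1 hk (by simp [m11])
  rw [hv₂1] at h5
  have hdu : du p (lowerOne p * k) = 1 := by
    ext; rw [du_val, e]; simp only [mat_mul, h1, h2, h3, h4, m00, m01, m10, m11]; simp
  rw [v_tr p μ₂ μ'₂ v₂ hv₂B g (lowerOne p * k) c
    (by rw [e]; simp only [mat_mul, h1, h2, h3, h4, m00, m01, m10, m11]; simp [hc])
    (by rw [e]; simp only [mat_mul, h1, h2, h3, h4, m00, m01, m10, m11]; simp [hy]; field_simp),
    h5, hdu]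
  simp [div_div]
end V2

lemma gpow (m : ℕ) : mat p (gamma p ^ m) 0 0 = ((p : ℚ_[p]) ^ m)⁻¹ ∧ mat p (gamma p ^ m) 0 1 = 0 ∧
    mat p (gamma p ^ m) 1 0 = 0 ∧ mat p (gamma p ^ m) 1 1 = 1 := by
  have e : gamma p = mkG p (p : ℚ_[p])⁻¹ 0 0 1 (by simp [p_ne p]) := rfl
  obtain ⟨h1, h2, h3, h4⟩ := mkG_mat p (p : ℚ_[p])⁻¹ 0 0 1 (by simp [p_ne p])
  rw [← e] at h1 h2 h3 h4
  induction m with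
  | zero => simp [mat]
  | succ m ih =>
    obtain ⟨i1, i2, i3, i4⟩ := ih
    simp only [pow_succ, mat_mul, h1, h2, h3, h4, i1, i2, i3, i4]
    simp [mul_comm]


/-- Lemma «calcul-H» in the ramified case: `H = ext(h)` equals
`μ₂(-1) α₁^{n₁-n} · (γ^{n-n₁} v₁) ⊗ v₂`, where `v₁` is the new vector of
`Ind_B^G (μ₁ ⊗ μ'₁)` (conductor `n₁`, `μ₁` unramified) and `v₂` is the new
vector of `Ind_B^G (μ₂ ⊗ μ'₂)` (conductor `n₂`, `μ'₂` unramified). -/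
theorem stmt13 (n₁ n₂ n : ℕ) (hn₁ : 1 ≤ n₁) (hn₂ : 1 ≤ n₂)
    (hn : max n₁ n₂ ≤ n)
    (μ₁ μ'₁ μ₂ μ'₂ : ℚ_[p]ˣ →* ℂˣ)
    (hμ₁ : Unramified p μ₁) (hμ'₂ : Unramified p μ'₂)
    (hμ₂ : TrivialOnOnePlusP p n μ₂)
    (α₁ : ℂ) (hα₁ : α₁ = ((μ₁ (pu p) : ℂ))⁻¹ * (Real.sqrt p : ℂ))
    (v₁ v₂ : GL (Fin 2) ℚ_[p] → ℂ)
    (hv₁B : ∀ (b g : GL (Fin 2) ℚ_[p]) (a d : ℚ_[p]ˣ),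
      mat p b 1 0 = 0 → mat p b 0 0 = a → mat p b 1 1 = d →
      v₁ (b * g) = (μ₁ a : ℂ) * (μ'₁ d : ℂ) *
        (Real.sqrt ‖(a : ℚ_[p]) / (d : ℚ_[p])‖ : ℂ) * v₁ g)
    (hv₁I : ∀ (g k : GL (Fin 2) ℚ_[p]) (d : ℚ_[p]ˣ),
      inI p n₁ k → mat p k 1 1 = d →
      v₁ (g * k) = (μ₁ d : ℂ) * (μ'₁ d : ℂ) * v₁ g)
    (hv₁supp : ∀ k : GL (Fin 2) ℚ_[p], inK p k → ¬ inI p n₁ k → v₁ k = 0)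
    (hv₁1 : v₁ 1 = 1)
    (hv₂B : ∀ (b g : GL (Fin 2) ℚ_[p]) (a d : ℚ_[p]ˣ),
      mat p b 1 0 = 0 → mat p b 0 0 = a → mat p b 1 1 = d →
      v₂ (b * g) = (μ₂ a : ℂ) * (μ'₂ d : ℂ) *
        (Real.sqrt ‖(a : ℚ_[p]) / (d : ℚ_[p])‖ : ℂ) * v₂ g)
    (hv₂I : ∀ (g k : GL (Fin 2) ℚ_[p]) (d : ℚ_[p]ˣ),
      inI p n₂ k → mat p k 1 1 = d →
      v₂ (g * k) = (μ₂ d : ℂ) * (μ'₂ d : ℂ) * v₂ g)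
    (hv₂supp : ∀ k : GL (Fin 2) ℚ_[p], inI p 1 k → v₂ k = 0)
    (hv₂1 : v₂ (lowerOne p) = 1)
    (h : GL (Fin 2) ℚ_[p] → ℂ)
    (hhT : ∀ (t g : GL (Fin 2) ℚ_[p]) (a d : ℚ_[p]ˣ),
      inT p t → mat p t 0 0 = a → mat p t 1 1 = d →
      h (t * g) = (μ₁ a : ℂ) * (μ'₁ d : ℂ) * (μ'₂ a : ℂ) * (μ₂ d : ℂ) * h g)
    (hhJ : ∀ j : GL (Fin 2) ℚ_[p], inJ p n j → h j = 1)
    (hhsupp : ∀ g : GL (Fin 2) ℚ_[p],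
      (¬ ∃ t j : GL (Fin 2) ℚ_[p], inT p t ∧ inJ p n j ∧ g = t * j) → h g = 0)
    (H : GL (Fin 2) ℚ_[p] → GL (Fin 2) ℚ_[p] → ℂ)
    (hHB : ∀ (b₁ b₂ g₁ g₂ : GL (Fin 2) ℚ_[p]) (a₁ d₁ a₂ d₂ : ℚ_[p]ˣ),
      mat p b₁ 1 0 = 0 → mat p b₁ 0 0 = a₁ → mat p b₁ 1 1 = d₁ →
      mat p b₂ 1 0 = 0 → mat p b₂ 0 0 = a₂ → mat p b₂ 1 1 = d₂ →
      H (b₁ * g₁) (b₂ * g₂) =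
        (μ₁ a₁ : ℂ) * (μ'₁ d₁ : ℂ) * (μ₂ a₂ : ℂ) * (μ'₂ d₂ : ℂ) *
          (Real.sqrt ‖((a₁ : ℚ_[p]) * (a₂ : ℚ_[p])) /
            ((d₁ : ℚ_[p]) * (d₂ : ℚ_[p]))‖ : ℂ) * H g₁ g₂)
    (hHdiag : ∀ g : GL (Fin 2) ℚ_[p], H g g = 0)
    (hHw : ∀ g : GL (Fin 2) ℚ_[p], H g (wEl p * g) = h g) :
    ∀ g₁ g₂ : GL (Fin 2) ℚ_[p],
      H g₁ g₂ = (μ₂ (-1) : ℂ) * α₁ ^ ((n₁ : ℤ) - (n : ℤ)) *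
        v₁ (g₁ * gamma p ^ (n - n₁)) * v₂ g₂ := by
  intro g₁ g₂
  have hn1 : n₁ ≤ n := (le_max_left _ _).trans hn
  obtain ⟨m, rfl⟩ := Nat.exists_eq_add_of_le hn1
  rw [Nat.add_sub_cancel_left]
  have hp0 : (0 : ℝ) < p := by exact_mod_cast (Fact.out : p.Prime).pos
  -- the shifted vector
  obtain ⟨γ00, γ01, γ10, γ11⟩ := gpow p m
  have s10 : mat p (g₁ * gamma p ^ m) 1 0 = mat p g₁ 1 0 * ((p : ℚ_[p]) ^ m)⁻¹ := by
    rw [mat_mul, γ00, γ10]; ring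
  have s11 : mat p (g₁ * gamma p ^ m) 1 1 = mat p g₁ 1 1 := by
    rw [mat_mul, γ01, γ11]; ring
  have sdu : du p (g₁ * gamma p ^ m) = du p g₁ / (pu p) ^ m := by
    ext
    rw [du_val]; simp only [mat_mul, γ00, γ01, γ10, γ11]
    rw [Units.val_div_eq_div_val, du_val]
    simp [pu]; ring
  have hiff : ‖mat p (g₁ * gamma p ^ m) 1 0‖ ≤
      (p : ℝ) ^ (-(n₁ : ℤ)) * ‖mat p (g₁ * gamma p ^ m) 1 1‖ ↔
      ‖mat p g₁ 1 0‖ ≤ (p : ℝ) ^ (-((n₁ + m : ℕ) : ℤ)) * ‖mat p g₁ 1 1‖ := by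
    rw [s10, s11, norm_mul, norm_inv, norm_pow, Padic.norm_p]
    have e : (p : ℝ) ^ (-(n₁ : ℤ)) = (p : ℝ) ^ (-((n₁ + m : ℕ) : ℤ)) * (p : ℝ) ^ m := by
      rw [← zpow_natCast, ← zpow_add₀ hp0.ne']; congr 1; push_cast; ring
    rw [e, inv_pow, inv_inv]
    have hpm : (0 : ℝ) < (p : ℝ) ^ m := by positivity
    rw [show (p : ℝ) ^ (-((n₁ + m : ℕ) : ℤ)) * (p : ℝ) ^ m * ‖mat p g₁ 1 1‖ =
      (p : ℝ) ^ (-((n₁ + m : ℕ) : ℤ)) * ‖mat p g₁ 1 1‖ * (p : ℝ) ^ m by ring]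
    exact mul_le_mul_iff_left₀ hpm
  by_cases hA : ‖mat p g₂ 1 1‖ ≤ ‖mat p g₂ 1 0‖ ∧
      ‖mat p g₁ 1 0‖ ≤ (p : ℝ) ^ (-((n₁ + m : ℕ) : ℤ)) * ‖mat p g₁ 1 1‖
  · obtain ⟨hA2, hA1⟩ := hA
    have hc20 : mat p g₂ 1 0 ≠ 0 := by
      intro h0
      rw [h0, norm_zero] at hA2
      have h1 := norm_le_zero_iff.1 hA2
      exact (du p g₂).ne_zero (by rw [du_val, h0, h1]; ring)
    have hd10 : mat p g₁ 1 1 ≠ 0 := by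
      intro h0
      rw [h0, norm_zero, mul_zero] at hA1
      have h1 := norm_le_zero_iff.1 hA1
      exact (du p g₁).ne_zero (by rw [du_val, h0, h1]; ring)
    obtain ⟨c, hc⟩ : ∃ c : ℚ_[p]ˣ, mat p g₂ 1 0 = c := ⟨Units.mk0 _ hc20, rfl⟩
    obtain ⟨d, hd⟩ : ∃ d : ℚ_[p]ˣ, mat p g₁ 1 1 = d := ⟨Units.mk0 _ hd10, rfl⟩
    have hc0 := c.ne_zero
    have hd0 := d.ne_zero
    rw [v1_val p n₁ μ₁ μ'₁ v₁ hv₁B hv₁I hv₁1 _ d (s11.trans hd) (hiff.2 hA1),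
      v2_val p n₂ μ₂ μ'₂ v₂ hv₂B hv₂I hv₂1 g₂ c hc hA2, sdu]
    -- the unit `u`
    set y := mat p g₂ 1 1 / c with hy
    set x := mat p g₁ 1 0 / d with hx
    have hyn : ‖y‖ ≤ 1 := by
      rw [hy, norm_div, ← hc]; exact div_le_one_of_le₀ hA2 (norm_nonneg _)
    have hxn : ‖x‖ ≤ (p : ℝ) ^ (-((n₁ + m : ℕ) : ℤ)) := by
      rw [hx, norm_div, div_le_iff₀ (norm_pos_iff.2 hd0), ← hd]; exact hA1
    have hyx : ‖y * x‖ ≤ (p : ℝ) ^ (-((n₁ + m : ℕ) : ℤ)) := by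
      rw [norm_mul]
      exact (mul_le_of_le_one_left (norm_nonneg _) hyn).trans hxn
    have hlt : ‖y * x‖ < 1 := hyx.trans_lt (zp_lt p _ (by omega))
    have hun : ‖1 - y * x‖ = 1 := by
      rw [sub_eq_add_neg, Padic.add_eq_max_of_ne (by rw [norm_neg, norm_one]; exact hlt.ne')]
      rw [norm_neg, norm_one]; exact max_eq_left hlt.le
    have hu0 : 1 - y * x ≠ 0 := by rw [← norm_ne_zero_iff, hun]; exact one_ne_zero
    obtain ⟨u, hu⟩ : ∃ u : ℚ_[p]ˣ, (u : ℚ_[p]) = 1 - y * x := ⟨Units.mk0 _ hu0, rfl⟩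
    have hμ1u : μ₁ u = 1 := hμ₁ u (by rw [hu, hun])
    have hμ2u : μ₂ u = 1 := hμ₂ u (by rw [hu]; simpa using hyx)
    have e2 : mat p g₂ 1 1 = c * y := by rw [hy]; field_simp
    have e1 : mat p g₁ 1 0 = d * x := by rw [hx]; field_simp
    -- factor `g = t * j`
    obtain ⟨t00, t01, t10, t11⟩ := mkG_mat p (c : ℚ_[p]) 0 0 d (by simp)
    set t := mkG p (c : ℚ_[p]) 0 0 d (by simp)
    obtain ⟨j00, j01, j10, j11⟩ := mkG_mat p 1 y x 1 (by rw [mul_one]; exact hu0)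
    set j := mkG p 1 y x 1 (by rw [mul_one]; exact hu0)
    have hh : h (t * j) = (μ₁ c : ℂ) * (μ'₁ d : ℂ) * (μ'₂ c : ℂ) * (μ₂ d : ℂ) := by
      rw [hhT t j c d ⟨t10, t01⟩ t00 t11, hhJ j ⟨j00, j11, by rw [j01]; exact hyn,
        by rw [j10]; exact hxn⟩, mul_one]
    have dug : du p (t * j) = c * d * u := by
      ext; rw [du_val]; simp only [mat_mul, t00, t01, t10, t11, j00, j01, j10, j11]
      simp [hu]; ring
    obtain ⟨w00, w01, w10, w11⟩ := mkG_mat p (0 : ℚ_[p]) 1 1 0 (by simp)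
    have ew : wEl p = mkG p (0 : ℚ_[p]) 1 1 0 (by simp) := rfl
    rw [← ew] at w00 w01 w10 w11
    have duwg : du p (wEl p * (t * j)) = -1 * (c * d * u) := by
      ext; rw [du_val]
      simp only [mat_mul, t00, t01, t10, t11, j00, j01, j10, j11, w00, w01, w10, w11]
      simp [hu]; ring
    obtain ⟨b₁, hb1, b110, b100, b111⟩ := exB p g₁ (t * j) 1
      (by simp only [mat_mul, t00, t01, t10, t11, j00, j01, j10, j11]; simp [e1])
      (by simp only [mat_mul, t00, t01, t10, t11, j00, j01, j10, j11]; simp [hd])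
    obtain ⟨b₂, hb2, b210, b200, b211⟩ := exB p g₂ (wEl p * (t * j)) 1
      (by simp only [mat_mul, t00, t01, t10, t11, j00, j01, j10, j11, w00, w01, w10, w11]
          simp [hc])
      (by simp only [mat_mul, t00, t01, t10, t11, j00, j01, j10, j11, w00, w01, w10, w11]
          simp [e2])
    have hH := hHB b₁ b₂ (t * j) (wEl p * (t * j)) _ _ _ _ b110 b100 b111 b210 b200 b211
    rw [hHw, hh, ← hb1, ← hb2] at hH
    rw [hH, dug, duwg]
    have hun' : ‖(u : ℚ_[p])‖ = 1 := by rw [hu, hun]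
    have hcn : ‖(c : ℚ_[p])‖ ≠ 0 := norm_ne_zero_iff.2 hc0
    have hdn : ‖(d : ℚ_[p])‖ ≠ 0 := norm_ne_zero_iff.2 hd0
    -- norms
    have n1 : ‖((du p g₁ / (c * d * u * 1) : ℚ_[p]ˣ) : ℚ_[p]) *
        ((du p g₂ / (-1 * (c * d * u) * 1) : ℚ_[p]ˣ) : ℚ_[p]) /
        (((1 : ℚ_[p]ˣ) : ℚ_[p]) * ((1 : ℚ_[p]ˣ) : ℚ_[p]))‖ =
        ‖(du p g₁ : ℚ_[p]) / ((d : ℚ_[p]) * d)‖ * ‖(du p g₂ : ℚ_[p]) / ((c : ℚ_[p]) * c)‖ := by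
      simp only [Units.val_div_eq_div_val, Units.val_mul, Units.val_one, Units.val_neg, norm_div,
        norm_mul, norm_neg, norm_one, hun']
      field_simp
    have n2 : ‖((du p g₁ / pu p ^ m : ℚ_[p]ˣ) : ℚ_[p]) / ((d : ℚ_[p]) * d)‖ =
        (p : ℝ) ^ m * ‖(du p g₁ : ℚ_[p]) / ((d : ℚ_[p]) * d)‖ := by
      have : ((pu p : ℚ_[p]ˣ) : ℚ_[p]) = p := rfl
      simp only [Units.val_div_eq_div_val, Units.val_pow_eq_pow_val, norm_div,
        norm_mul, norm_pow, this, Padic.norm_p, inv_pow, div_inv_eq_mul]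
      field_simp
    have sq : Real.sqrt ((p : ℝ) ^ m) = Real.sqrt p ^ m := by
      rw [Real.sqrt_eq_iff_mul_self_eq (by positivity) (by positivity), ← mul_pow,
        Real.mul_self_sqrt hp0.le]
    rw [n1, n2, Real.sqrt_mul (norm_nonneg _), Real.sqrt_mul (by positivity), sq]
    have sp : (Real.sqrt p : ℂ) ≠ 0 := by
      rw [Ne, Complex.ofReal_eq_zero]; exact (Real.sqrt_pos.2 hp0).ne'
    have mneg : ((μ₂ (-1) : ℂˣ) : ℂ) ≠ 0 := Units.ne_zero _
    have mneg2 : ((μ₂ (-1) : ℂˣ) : ℂ) * ((μ₂ (-1) : ℂˣ) : ℂ) = 1 := by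
      rw [← Units.val_mul, ← map_mul]; simp
    have eα : α₁ ^ ((n₁ : ℤ) - ((n₁ + m : ℕ) : ℤ)) =
        (μ₁ (pu p) : ℂ) ^ m * ((Real.sqrt p : ℂ) ^ m)⁻¹ := by
      rw [show (n₁ : ℤ) - ((n₁ + m : ℕ) : ℤ) = -(m : ℤ) by push_cast; ring, _root_.zpow_neg,
        zpow_natCast, hα₁, mul_pow, mul_inv, inv_pow, inv_inv]
    rw [eα]
    have hμ1p : ((μ₁ (pu p) : ℂˣ) : ℂ) ≠ 0 := Units.ne_zero _
    have hμ1c : ((μ₁ c : ℂˣ) : ℂ) ≠ 0 := Units.ne_zero _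
    have hμ1d : ((μ₁ d : ℂˣ) : ℂ) ≠ 0 := Units.ne_zero _
    have hμ2c : ((μ₂ c : ℂˣ) : ℂ) ≠ 0 := Units.ne_zero _
    have hμ2d : ((μ₂ d : ℂˣ) : ℂ) ≠ 0 := Units.ne_zero _
    simp only [map_div, map_mul, map_pow, map_one, hμ1u, hμ2u, Units.val_div_eq_div_val,
      Units.val_mul, Units.val_one, Units.val_pow_eq_pow_val, Complex.ofReal_mul,
      Complex.ofReal_pow]
    field_simp
    rw [pow_two, mneg2]
  · have hR : (μ₂ (-1) : ℂ) * α₁ ^ ((n₁ : ℤ) - ((n₁ + m : ℕ) : ℤ)) *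
        v₁ (g₁ * gamma p ^ m) * v₂ g₂ = 0 := by
      by_cases h2 : ‖mat p g₂ 1 1‖ ≤ ‖mat p g₂ 1 0‖
      · rw [v1_zero p n₁ μ₁ μ'₁ v₁ hn₁ hv₁B hv₁supp _ (fun h1 => hA ⟨h2, hiff.1 h1⟩)]
        ring
      · rw [v2_zero p μ₂ μ'₂ v₂ hv₂B hv₂supp _ h2, mul_zero]
    rw [hR]
    by_cases hD : mat p g₂ 1 0 * mat p g₁ 1 1 - mat p g₂ 1 1 * mat p g₁ 1 0 = 0
    · have hg1 := (du p g₁).ne_zero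
      have hg2 := (du p g₂).ne_zero
      rw [du_val] at hg1 hg2
      obtain ⟨e, he1, he2⟩ : ∃ e : ℚ_[p]ˣ, mat p g₁ 1 0 = e * mat p g₂ 1 0 ∧
          mat p g₁ 1 1 = e * mat p g₂ 1 1 := by
        by_cases hc2 : mat p g₂ 1 0 = 0
        · have hd2 : mat p g₂ 1 1 ≠ 0 := by
            intro h0; apply hg2; rw [hc2, h0]; ring
          have hc1 : mat p g₁ 1 0 = 0 := by
            rw [hc2] at hD
            simpa [hd2] using hD
          have hd1 : mat p g₁ 1 1 ≠ 0 := by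
            intro h0; apply hg1; rw [hc1, h0]; ring
          exact ⟨Units.mk0 (mat p g₁ 1 1 / mat p g₂ 1 1) (div_ne_zero hd1 hd2),
            by simp [hc1, hc2], by simp; field_simp⟩
        · have hc1 : mat p g₁ 1 0 ≠ 0 := by
            intro h0
            rw [h0] at hD
            have hd1 : mat p g₁ 1 1 = 0 := by simpa [hc2] using hD
            apply hg1; rw [h0, hd1]; ring
          refine ⟨Units.mk0 (mat p g₁ 1 0 / mat p g₂ 1 0) (div_ne_zero hc1 hc2),
            by simp; field_simp, ?_⟩
          simp only [Units.val_mk0]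
          field_simp
          linear_combination hD
      obtain ⟨b, hb, k1, k2, k3⟩ := exB p g₁ g₂ e he1 he2
      have hH := hHB b 1 g₂ g₂ _ _ 1 1 k1 k2 k3 (by simp [mat]) (by simp [mat]) (by simp [mat])
      rw [← hb, one_mul, hHdiag, mul_zero] at hH
      exact hH
    · obtain ⟨m00, m01, m10, m11⟩ := mkG_mat p _ _ _ _ hD
      set g := mkG p _ _ _ _ hD
      obtain ⟨w00, w01, w10, w11⟩ := mkG_mat p (0 : ℚ_[p]) 1 1 0 (by simp)
      have ew : wEl p = mkG p (0 : ℚ_[p]) 1 1 0 (by simp) := rfl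
      rw [← ew] at w00 w01 w10 w11
      obtain ⟨b₁, hb1, b110, b100, b111⟩ := exB p g₁ g 1 (by simp [m10]) (by simp [m11])
      obtain ⟨b₂, hb2, b210, b200, b211⟩ := exB p g₂ (wEl p * g) 1
        (by simp [mat_mul, w10, w11, m00]) (by simp [mat_mul, w10, w11, m01])
      have hH := hHB b₁ b₂ g (wEl p * g) _ _ _ _ b110 b100 b111 b210 b200 b211
      rw [hHw, ← hb1, ← hb2, hhsupp g, mul_zero] at hH
      · exact hH
      · rintro ⟨t, j, ⟨t10, t01⟩, ⟨j00, j11, j01, j10⟩, hg⟩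
        apply hA
        rw [hg, mat_mul] at m00 m01 m10 m11
        rw [j00, t01] at m00
        rw [t01] at m01
        rw [t10] at m10
        rw [j11, t10] at m11
        rw [← m00, ← m01, ← m10, ← m11]
        simp only [mul_one, zero_mul, add_zero, zero_add, norm_mul]
        refine ⟨mul_le_of_le_one_right (norm_nonneg _) j01, ?_⟩
        rw [mul_comm]
        exact mul_le_mul_of_nonneg_right j10 (norm_nonneg _)
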